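/- Let d ≥ 3, δ' ∈ (0,1), let a be an integer with 3 ≤ a ≤ d, let N be an integer with N ≥ 100·d²/δ'^{2d+3}, and let η̂ ∈ [0,1]. Let μ be a probability measure on ℝ^N that approximately matches the moments of the standard Gaussian up to degree 2d with slack η̂. Then μ({x ∈ ℝ^N : |Σ_{j=1}^N (x_j/√N)^a| > δ'^{d+1}}) ≤ δ'/d. -/

import Mathlib

open MeasureTheory ProbabilityTheory

/-- The standard Gaussian measure on `ι → ℝ` (product of `N(0,1)`). -/
noncomputable def stdGaussianPi (ι : Type) [Fintype ι] : Measure (ι → ℝ) :=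
  Measure.pi fun _ => gaussianReal 0 1

/-- `μ` approximately matches the moments of the standard Gaussian up to degree `k`
with slack `η`. -/
def MomentMatches {ι : Type} [Fintype ι] (k : ℕ) (η : ℝ)
    (μ : Measure (ι → ℝ)) : Prop :=
  ∀ α : ι → ℕ, (∑ i, α i) ≤ k →
    Integrable (fun x => ∏ i, |x i| ^ α i) μ ∧
    |(∫ x, ∏ i, (x i) ^ α i ∂μ) - ∫ y, ∏ i, (y i) ^ α i ∂(stdGaussianPi ι)| ≤ η

/-!
The second moment of `S = N^(-a/2) * ∑ x_j ^ a` is a combination of moments of `μ` of degree `2a`,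
so it differs from its Gaussian value by at most `η * N^(2-a)`. Under the Gaussian measure the
coordinates are independent, hence `𝔼 S² = Var S + (𝔼 S)² ≤ N^(1-a) * m_{2a} + N^(2-a) * m_a²`,
where the one-dimensional moments satisfy `m_n² ≤ n^(n-2)` by the recursion
`m_{n+2} = (n+1) * m_n`. For `a ≥ 3` and `N ≥ 2a` the total is at most `(3a + η) / N`, and
Chebyshev's inequality concludes.
-/

section GaussianMoments

open scoped NNReal

variable {m : ℝ} {v : ℝ≥0}

lemma hasDerivAt_gaussianPDFReal (m : ℝ) (v : ℝ≥0) (x : ℝ) :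
    HasDerivAt (gaussianPDFReal m v) (-((x - m) / v * gaussianPDFReal m v x)) x := by
  have hexponent : HasDerivAt (fun y : ℝ => -(y - m) ^ 2 / (2 * v)) (-((x - m) / v)) x := by
    refine ((((hasDerivAt_id x).sub_const m).pow 2).neg.div_const (2 * (v : ℝ))).congr_deriv ?_
    simp only [id, Nat.cast_ofNat, Nat.add_one_sub_one, pow_one, mul_one, neg_div,
      mul_div_mul_left _ _ (two_ne_zero' ℝ)]
  rw [gaussianPDFReal_def]
  exact (hexponent.exp.const_mul (√(2 * Real.pi * v))⁻¹).congr_deriv (by ring)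

lemma integrable_gaussianReal_iff (hv : v ≠ 0) {E : Type*} [NormedAddCommGroup E]
    [NormedSpace ℝ E] {f : ℝ → E} :
    Integrable f (gaussianReal m v) ↔ Integrable (fun x => gaussianPDFReal m v x • f x) := by
  rw [gaussianReal_of_var_ne_zero m hv, integrable_withDensity_iff_integrable_smul'
    (measurable_gaussianPDF m v) (ae_of_all _ fun _ => gaussianPDF_lt_top)]
  simp only [toReal_gaussianPDF]

/-- **Stein's lemma.** -/
lemma integral_sub_mul_gaussianReal {f f' : ℝ → ℝ} (hf : ∀ x, HasDerivAt f (f' x) x)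
    (hf_int : Integrable f (gaussianReal m v)) (hf'_int : Integrable f' (gaussianReal m v))
    (hxf_int : Integrable (fun x => (x - m) * f x) (gaussianReal m v)) :
    ∫ x, (x - m) * f x ∂gaussianReal m v = v * ∫ x, f' x ∂gaussianReal m v := by
  rcases eq_or_ne v 0 with rfl | hv
  · simp
  have hv' : (v : ℝ) ≠ 0 := by exact_mod_cast hv
  rw [integrable_gaussianReal_iff hv] at hf_int hf'_int hxf_int
  have hparts := integral_mul_deriv_eq_deriv_mul_of_integrable
    (fun x _ => hf x) (fun x _ => hasDerivAt_gaussianPDFReal m v x)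
    ((hxf_int.const_mul (-(v : ℝ)⁻¹)).congr (ae_of_all _ fun x => by
      simp only [smul_eq_mul, Pi.mul_apply]; ring))
    (hf'_int.congr (ae_of_all _ fun x => mul_comm _ _))
    (hf_int.congr (ae_of_all _ fun x => mul_comm _ _))
  simp only [integral_gaussianReal_eq_integral_smul hv, smul_eq_mul]
  calc ∫ x, gaussianPDFReal m v x * ((x - m) * f x)
      = -v * ∫ x, f x * -((x - m) / v * gaussianPDFReal m v x) := by
        rw [← integral_const_mul]
        congr with x
        field_simp
    _ = v * ∫ x, gaussianPDFReal m v x * f' x := by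
        simp only [hparts, mul_comm (f' _), neg_mul_neg]

lemma integrable_pow_gaussianReal (m : ℝ) (v : ℝ≥0) (n : ℕ) :
    Integrable (fun x => x ^ n) (gaussianReal m v) :=
  (memLp_id_gaussianReal n).integrable_norm_pow'.mono' (by fun_prop)
    (ae_of_all _ fun x => (norm_pow x n).le)

lemma memLp_two_pow_gaussianReal (m : ℝ) (v : ℝ≥0) (n : ℕ) :
    MemLp (fun x => x ^ n) 2 (gaussianReal m v) := by
  rw [memLp_two_iff_integrable_sq (by fun_prop)]
  simpa only [← pow_mul] using integrable_pow_gaussianReal m v (n * 2)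

lemma integral_pow_add_two_gaussianReal (v : ℝ≥0) (n : ℕ) :
    ∫ x, x ^ (n + 2) ∂gaussianReal 0 v = (n + 1) * v * ∫ x, x ^ n ∂gaussianReal 0 v := by
  have hstein := integral_sub_mul_gaussianReal (m := 0) (v := v)
    (fun x => hasDerivAt_pow (n + 1) x) (integrable_pow_gaussianReal 0 v _)
    ((integrable_pow_gaussianReal 0 v _).const_mul _)
    (by simpa only [sub_zero, ← pow_succ'] using integrable_pow_gaussianReal 0 v (n + 2))
  simp only [sub_zero, ← pow_succ', integral_const_mul, Nat.cast_add_one,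
    Nat.add_one_sub_one] at hstein
  rw [hstein]
  ring

lemma sq_integral_pow_add_two_gaussianReal_le (v : ℝ≥0) (n : ℕ) :
    (∫ x, x ^ (n + 2) ∂gaussianReal 0 v) ^ 2 ≤ (n + 2 : ℝ) ^ n * v ^ (n + 2) := by
  induction n using Nat.twoStepInduction with
  | zero => simp [integral_pow_add_two_gaussianReal]
  | one =>
    rw [integral_pow_add_two_gaussianReal]
    simp only [pow_one, integral_id_gaussianReal, mul_zero, ne_eq, OfNat.ofNat_ne_zero,
      not_false_eq_true, zero_pow]
    positivity
  | more n ih _ =>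
    rw [integral_pow_add_two_gaussianReal, mul_pow]
    calc (((n + 2 : ℕ) + 1 : ℝ) * v) ^ 2 * (∫ x, x ^ (n + 2) ∂gaussianReal 0 v) ^ 2
        ≤ (((n + 2 : ℕ) + 2 : ℝ) * v) ^ 2 * (((n + 2 : ℕ) + 2 : ℝ) ^ n * v ^ (n + 2)) := by
          gcongr
          · norm_num
          · refine ih.trans ?_
            gcongr
            linarith
      _ = ((n + 2 : ℕ) + 2 : ℝ) ^ (n + 2) * v ^ (n + 2 + 2) := by ring

lemma integral_pow_two_mul_add_two_gaussianReal_le (v : ℝ≥0) (n : ℕ) :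
    ∫ x, x ^ (2 * n + 2) ∂gaussianReal 0 v ≤ (2 * n + 2 : ℝ) ^ n * v ^ (n + 1) := by
  refine le_of_sq_le_sq ?_ (by positivity)
  calc (∫ x, x ^ (2 * n + 2) ∂gaussianReal 0 v) ^ 2
      ≤ ((2 * n : ℕ) + 2 : ℝ) ^ (2 * n) * v ^ (2 * n + 2) :=
        sq_integral_pow_add_two_gaussianReal_le v (2 * n)
    _ = ((2 * n + 2 : ℝ) ^ n * v ^ (n + 1)) ^ 2 := by push_cast; ring

end GaussianMoments

lemma integral_sq_sum_pi_le {ι Ω : Type*} [Fintype ι] [MeasurableSpace Ω] {ν : Measure Ω}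
    [IsProbabilityMeasure ν] {f : Ω → ℝ} (hf : MemLp f 2 ν) :
    ∫ y, (∑ i : ι, f (y i)) ^ 2 ∂Measure.pi (fun _ => ν) ≤
      Fintype.card ι * ∫ x, f x ^ 2 ∂ν + (Fintype.card ι * ∫ x, f x ∂ν) ^ 2 := by
  set S : (ι → Ω) → ℝ := ∑ i, fun y => f (y i) with hS
  have hmemLp : MemLp S 2 (Measure.pi fun _ => ν) :=
    memLp_finsetSum' _ fun i _ => hf.comp_measurePreserving (measurePreserving_eval _ i)
  have hmean : ∫ y, S y ∂Measure.pi (fun _ => ν) = Fintype.card ι * ∫ x, f x ∂ν := by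
    simp only [hS, Finset.sum_apply]
    rw [integral_finsetSum _ fun i _ => integrable_comp_eval (hf.integrable one_le_two)]
    simp [integral_comp_eval (μ := fun _ : ι => ν) hf.aestronglyMeasurable]
  have hvar : Var[S; Measure.pi fun _ => ν] ≤ Fintype.card ι * ∫ x, f x ^ 2 ∂ν := by
    rw [hS, variance_sum_pi fun _ => hf, Finset.sum_const, Finset.card_univ, nsmul_eq_mul]
    gcongr
    exact variance_le_expectation_sq hf.aestronglyMeasurable
  have hsecond := variance_eq_sub hmemLp
  rw [hmean] at hsecond
  have hS_sq : ∀ y, (S ^ 2) y = (∑ i, f (y i)) ^ 2 := fun y => by simp [hS]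
  simp only [hS_sq] at hsecond
  linarith

lemma prod_pow_single_add_single {ι M : Type*} [Fintype ι] [DecidableEq ι] [CommMonoid M]
    (x : ι → M) (i j : ι) (a b : ℕ) :
    ∏ k, x k ^ (Pi.single i a + Pi.single j b : ι → ℕ) k = x i ^ a * x j ^ b := by
  simp only [Pi.add_apply, pow_add, Finset.prod_mul_distrib]
  simp [Pi.single_apply, pow_ite]

lemma momentMatches_stdGaussianPi (ι : Type) [Fintype ι] (k : ℕ) :
    MomentMatches k 0 (stdGaussianPi ι) := fun α _ => by
  refine ⟨Integrable.fintype_prod (f := fun i x => |x| ^ α i) fun i => ?_, by simp⟩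
  simpa only [abs_pow] using (integrable_pow_gaussianReal 0 1 (α i)).abs

namespace MomentMatches

variable {ι : Type} [Fintype ι] {k l a b : ℕ} {η : ℝ} {μ : Measure (ι → ℝ)}

lemma mono (hμ : MomentMatches l η μ) (hkl : k ≤ l) : MomentMatches k η μ :=
  fun α hα => hμ α (hα.trans hkl)

lemma slack_nonneg (hμ : MomentMatches k η μ) : 0 ≤ η :=
  (abs_nonneg _).trans (hμ 0 (by simp)).2

lemma integrable_prod_pow (hμ : MomentMatches k η μ) {α : ι → ℕ} (hα : ∑ i, α i ≤ k) :
    Integrable (fun x => ∏ i, x i ^ α i) μ :=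
  (hμ α hα).1.mono'
    (Finset.measurable_prod _ fun i _ => by fun_prop).aestronglyMeasurable
    (ae_of_all _ fun x => by simp [norm_prod])

lemma integrable_pow_mul_pow (hμ : MomentMatches k η μ) (hab : a + b ≤ k) (i j : ι) :
    Integrable (fun x => x i ^ a * x j ^ b) μ := by
  classical
  have hint : Integrable (fun x => ∏ l, x l ^ (Pi.single i a + Pi.single j b : ι → ℕ) l) μ :=
    hμ.integrable_prod_pow (by simpa [Finset.sum_add_distrib] using hab)
  exact hint.congr (ae_of_all _ fun x => prod_pow_single_add_single x i j a b)

lemma abs_integral_pow_mul_pow_sub_le (hμ : MomentMatches k η μ) (hab : a + b ≤ k) (i j : ι) :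
    |∫ x, x i ^ a * x j ^ b ∂μ - ∫ y, y i ^ a * y j ^ b ∂stdGaussianPi ι| ≤ η := by
  classical
  simp only [← fun x : ι → ℝ => prod_pow_single_add_single x i j a b]
  exact (hμ (Pi.single i a + Pi.single j b) (by simpa [Finset.sum_add_distrib] using hab)).2

lemma integrable_sq_sum_pow (hμ : MomentMatches (2 * a) η μ) :
    Integrable (fun x => (∑ i, x i ^ a) ^ 2) μ := by
  simp only [sq, Finset.sum_mul_sum]
  exact integrable_finsetSum _ fun i _ => integrable_finsetSum _ fun j _ =>
    hμ.integrable_pow_mul_pow (two_mul a).ge i j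

lemma integral_sq_sum_pow (hμ : MomentMatches (2 * a) η μ) :
    ∫ x, (∑ i, x i ^ a) ^ 2 ∂μ = ∑ i, ∑ j, ∫ x, x i ^ a * x j ^ a ∂μ := by
  have hint := hμ.integrable_pow_mul_pow (two_mul a).ge
  simp only [sq, Finset.sum_mul_sum]
  rw [integral_finsetSum _ fun i _ => integrable_finsetSum _ fun j _ => hint i j]
  exact Finset.sum_congr rfl fun i _ => integral_finsetSum _ fun j _ => hint i j

lemma abs_integral_sq_sum_pow_sub_le (hμ : MomentMatches (2 * a) η μ) :
    |∫ x, (∑ i, x i ^ a) ^ 2 ∂μ - ∫ y, (∑ i, y i ^ a) ^ 2 ∂stdGaussianPi ι| ≤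
      (Fintype.card ι : ℝ) ^ 2 * η := by
  rw [hμ.integral_sq_sum_pow, (momentMatches_stdGaussianPi ι (2 * a)).integral_sq_sum_pow]
  simp only [← Finset.sum_sub_distrib]
  calc |∑ i, ∑ j, (∫ x, x i ^ a * x j ^ a ∂μ - ∫ y, y i ^ a * y j ^ a ∂stdGaussianPi ι)|
      ≤ ∑ _i : ι, ∑ _j : ι, η :=
        (Finset.abs_sum_le_sum_abs _ _).trans <| Finset.sum_le_sum fun i _ =>
          (Finset.abs_sum_le_sum_abs _ _).trans <| Finset.sum_le_sum fun j _ =>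
            hμ.abs_integral_pow_mul_pow_sub_le (two_mul a).ge i j
    _ = (Fintype.card ι : ℝ) ^ 2 * η := by
        simp only [Finset.sum_const, Finset.card_univ, nsmul_eq_mul]
        ring

lemma integral_sq_sum_pow_le (hμ : MomentMatches (2 * a) η μ) :
    ∫ x, (∑ i, x i ^ a) ^ 2 ∂μ ≤
      Fintype.card ι * ∫ t, t ^ (2 * a) ∂gaussianReal 0 1 +
        (Fintype.card ι * ∫ t, t ^ a ∂gaussianReal 0 1) ^ 2 + (Fintype.card ι : ℝ) ^ 2 * η := by
  have hgauss : ∫ y, (∑ i, y i ^ a) ^ 2 ∂stdGaussianPi ι ≤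
      Fintype.card ι * ∫ t, t ^ (2 * a) ∂gaussianReal 0 1 +
        (Fintype.card ι * ∫ t, t ^ a ∂gaussianReal 0 1) ^ 2 := by
    simpa only [stdGaussianPi, ← pow_mul, mul_comm a 2] using
      integral_sq_sum_pi_le (ι := ι) (memLp_two_pow_gaussianReal 0 1 a)
  linarith [(abs_le.1 hμ.abs_integral_sq_sum_pow_sub_le).2]

lemma integral_sq_sum_pow_le_mul_pow (hμ : MomentMatches (2 * a) η μ) (ha : 3 ≤ a)
    (hcard : 2 * a ≤ Fintype.card ι) :
    ∫ x, (∑ i, x i ^ a) ^ 2 ∂μ ≤ (3 * a + η) * (Fintype.card ι : ℝ) ^ (a - 1) := by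
  obtain ⟨b, rfl⟩ := Nat.exists_eq_add_of_le' ha
  have hη := hμ.slack_nonneg
  have hN : 2 * (b + 3 : ℝ) ≤ Fintype.card ι := by exact_mod_cast hcard
  set N : ℝ := (Fintype.card ι : ℝ)
  have hbN : (b + 3 : ℝ) ≤ N := by linarith [Nat.cast_nonneg (α := ℝ) b]
  have hmoment_two_mul : ∫ t, t ^ (2 * (b + 3)) ∂gaussianReal 0 1 ≤ 2 * (b + 3) * N ^ (b + 1) :=
    calc ∫ t, t ^ (2 * (b + 3)) ∂gaussianReal 0 1
        ≤ (2 * ((b + 2 : ℕ) : ℝ) + 2) ^ (b + 2) := by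
          simpa [mul_add] using integral_pow_two_mul_add_two_gaussianReal_le 1 (b + 2)
      _ = 2 * (b + 3) * (2 * (b + 3 : ℝ)) ^ (b + 1) := by push_cast; ring
      _ ≤ 2 * (b + 3) * N ^ (b + 1) := by gcongr
  have hsq_moment : (∫ t, t ^ (b + 3) ∂gaussianReal 0 1) ^ 2 ≤ (b + 3) * N ^ b :=
    calc (∫ t, t ^ (b + 3) ∂gaussianReal 0 1) ^ 2
        ≤ ((b + 1 : ℕ) + 2 : ℝ) ^ (b + 1) := by
          simpa using sq_integral_pow_add_two_gaussianReal_le 1 (b + 1)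
      _ = (b + 3) * (b + 3 : ℝ) ^ b := by push_cast; ring
      _ ≤ (b + 3) * N ^ b := by gcongr
  have hN_pow : 1 ≤ N ^ b := one_le_pow₀ (by linarith [Nat.cast_nonneg (α := ℝ) b])
  calc ∫ x, (∑ i, x i ^ (b + 3)) ^ 2 ∂μ
      ≤ N * ∫ t, t ^ (2 * (b + 3)) ∂gaussianReal 0 1 +
          N ^ 2 * (∫ t, t ^ (b + 3) ∂gaussianReal 0 1) ^ 2 + N ^ 2 * (η * 1) := by
        simpa only [mul_pow, mul_one] using hμ.integral_sq_sum_pow_le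
    _ ≤ N * (2 * (b + 3) * N ^ (b + 1)) + N ^ 2 * ((b + 3) * N ^ b) + N ^ 2 * (η * N ^ b) := by
        gcongr
    _ = (3 * (b + 3 : ℕ) + η) * N ^ (b + 3 - 1) := by
        rw [Nat.add_sub_assoc (by norm_num)]
        push_cast
        ring

end MomentMatches

lemma sq_sum_div_sqrt_pow {ι : Type*} (s : Finset ι) (x : ι → ℝ) {c : ℝ} (hc : 0 ≤ c) (a : ℕ) :
    (∑ i ∈ s, (x i / √c) ^ a) ^ 2 = (∑ i ∈ s, x i ^ a) ^ 2 / c ^ a := by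
  simp only [div_pow, ← Finset.sum_div]
  rw [← pow_mul, mul_comm a 2, pow_mul, Real.sq_sqrt hc]

lemma measure_lt_abs_le_integral_sq_div {Ω : Type*} [MeasurableSpace Ω] {μ : Measure Ω}
    {f : Ω → ℝ} (hf : Integrable (fun x => f x ^ 2) μ) {t : ℝ} (ht : 0 < t) :
    μ {x | t < |f x|} ≤ ENNReal.ofReal ((∫ x, f x ^ 2 ∂μ) / t ^ 2) := by
  have hsub : {x | t < |f x|} ⊆ {x | ENNReal.ofReal (t ^ 2) ≤ ENNReal.ofReal (f x ^ 2)} :=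
    fun x hx => ENNReal.ofReal_le_ofReal <| by
      rw [← sq_abs (f x)]
      exact pow_le_pow_left₀ ht.le (le_of_lt hx) 2
  rw [ENNReal.ofReal_div_of_pos (by positivity),
    ofReal_integral_eq_lintegral_ofReal hf (ae_of_all _ fun x => sq_nonneg (f x))]
  exact (measure_mono hsub).trans <| meas_ge_le_lintegral_div hf.aemeasurable.ennreal_ofReal
    (by simp [ht.ne']) ENNReal.ofReal_ne_top

lemma MomentMatches.measure_lt_abs_sum_div_sqrt_pow_le {ι : Type} [Fintype ι] {a : ℕ} {η : ℝ}
    {μ : Measure (ι → ℝ)} (hμ : MomentMatches (2 * a) η μ) (ha : 3 ≤ a)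
    (hcard : 2 * a ≤ Fintype.card ι) {t : ℝ} (ht : 0 < t) :
    μ {x | t < |∑ i, (x i / √(Fintype.card ι)) ^ a|} ≤
      ENNReal.ofReal ((3 * a + η) / (Fintype.card ι * t ^ 2)) := by
  have hN : (0 : ℝ) < Fintype.card ι := by exact_mod_cast (by omega : 0 < Fintype.card ι)
  have hsq x := sq_sum_div_sqrt_pow (ι := ι) Finset.univ x hN.le a
  have hsecond : ∫ x, (∑ i, (x i / √(Fintype.card ι)) ^ a) ^ 2 ∂μ ≤
      (3 * a + η) / Fintype.card ι := by
    simp only [hsq, integral_div]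
    rw [div_le_div_iff₀ (by positivity) hN]
    calc (∫ x, (∑ i, x i ^ a) ^ 2 ∂μ) * Fintype.card ι
        ≤ (3 * a + η) * (Fintype.card ι : ℝ) ^ (a - 1) * Fintype.card ι := by
          gcongr
          exact hμ.integral_sq_sum_pow_le_mul_pow ha hcard
      _ = (3 * a + η) * (Fintype.card ι : ℝ) ^ a := by
          rw [mul_assoc, ← pow_succ, Nat.sub_add_cancel (by omega)]
  refine (measure_lt_abs_le_integral_sq_div ?_ ht).trans (ENNReal.ofReal_le_ofReal ?_)
  · simpa only [hsq] using hμ.integrable_sq_sum_pow.div_const _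
  · rw [← div_div]
    gcongr

theorem concentration_sum_powers_general {ι : Type} [Fintype ι] {d a : ℕ} (ha : 3 ≤ a)
    (had : a ≤ d) {δ η : ℝ} (hδ : δ ∈ Set.Ioo (0 : ℝ) 1)
    (hcard : 100 * (d : ℝ) ^ 2 / δ ^ (2 * d + 3) ≤ Fintype.card ι) (hη : η ≤ 97 * d)
    {μ : Measure (ι → ℝ)} (hμ : MomentMatches (2 * a) η μ) :
    μ {x | δ ^ (d + 1) < |∑ i, (x i / √(Fintype.card ι)) ^ a|} ≤ ENNReal.ofReal (δ / d) := by
  obtain ⟨hδ_pos, hδ_lt_one⟩ := hδ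
  have had' : (a : ℝ) ≤ d := by exact_mod_cast had
  have hd : (3 : ℝ) ≤ d := by exact_mod_cast ha.trans had
  have hd_sq : 100 * (d : ℝ) ^ 2 ≤ Fintype.card ι * δ ^ (2 * d + 3) :=
    (div_le_iff₀ (by positivity)).1 hcard
  have hcard_ge : 100 * (d : ℝ) ^ 2 ≤ Fintype.card ι :=
    hd_sq.trans (mul_le_of_le_one_right (by positivity) (pow_le_one₀ hδ_pos.le hδ_lt_one.le))
  have htwo_mul : 2 * a ≤ Fintype.card ι := by
    have : (2 * a : ℝ) ≤ Fintype.card ι := by nlinarith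
    exact_mod_cast this
  have hN : (0 : ℝ) < Fintype.card ι := by nlinarith
  refine (hμ.measure_lt_abs_sum_div_sqrt_pow_le ha htwo_mul (by positivity)).trans
    (ENNReal.ofReal_le_ofReal ?_)
  rw [div_le_div_iff₀ (by positivity) (by positivity)]
  calc (3 * a + η) * d ≤ 100 * (d : ℝ) ^ 2 := by nlinarith
    _ ≤ Fintype.card ι * δ ^ (2 * d + 3) := hd_sq
    _ = δ * (Fintype.card ι * (δ ^ (d + 1)) ^ 2) := by ring

theorem concentration_sum_powers (d a N : ℕ) (hd : 3 ≤ d) (ha : 3 ≤ a) (had : a ≤ d)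
    (δ' ηh : ℝ) (hδ' : δ' ∈ Set.Ioo (0 : ℝ) 1)
    (hN : 100 * (d : ℝ) ^ 2 / δ' ^ (2 * d + 3) ≤ (N : ℝ))
    (hη : ηh ∈ Set.Icc (0 : ℝ) 1)
    (μ : Measure (Fin N → ℝ)) [IsProbabilityMeasure μ]
    (hμ : MomentMatches (2 * d) ηh μ) :
    μ {x | δ' ^ (d + 1) < |∑ j, (x j / Real.sqrt N) ^ a|} ≤
      ENNReal.ofReal (δ' / d) := by
  simpa only [Fintype.card_fin] using concentration_sum_powers_general (ι := Fin N) ha had hδ'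
    (by rwa [Fintype.card_fin]) (hη.2.trans (by norm_cast; omega)) (hμ.mono (by omega))
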